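/- arXiv:1202.1179 — 3 statements merged into one kernel-verified Lean document; each statement's English description precedes it below -/
import Mathlib

section
/- There exist δ₀ > 0 and K > 0 such that for every δ ∈ (0, δ₀) and every real σ with |σ| < d, the vector field X_{δ,σ} has exactly two zeros in the closed ball of radius δ^{−1/3} centred at the origin of ℝ³; these zeros S₊ = (x₊, y₊, z₊) and S₋ = (x₋, y₋, z₋) satisfy |x₊|, |y₊|, |x₋|, |y₋| ≤ Kδ², |z₊ − 1| ≤ Kδ and |z₋ + 1| ≤ Kδ. -/
/-!
Write `δ = ε ^ 3`, so that the large ball has radius `1 / ε`. Since `f, g, h` have order three,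
the rescaled remainders are `O(δ M ^ 3)` on the cube of half-side `M ≤ 1 / ε`, and `O(δ)`-Lipschitz
on bounded sets (`order_three_lip`, `smallRem_rescale`).

Localization (`apriori`): let `(x, y, z)` be a zero in the large ball. The first two equations
contain the large rotation terms `(α / δ) x`, `(α / δ) y`; solving for them gives first
`x, y = O(δ)`, because the remainders are `O(1)` on the whole ball. The third equation then reads
`z ^ 2 = 1 + O(δ ^ 2) + O(δ (1 + |z|) ^ 3)`, and `δ |z| ^ 3 ≤ ε ^ 2 z ^ 2` forces `|z| ≤ 2`. With all
coordinates bounded the same equations give `x, y = O(δ ^ 2)` and `z ^ 2 - 1 = O(δ)`, so `z` is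
`O(δ)`-close to `1` or to `-1`.

Existence and uniqueness (`local_zero`): zeros are the fixed points of `newtonMap`, which is a
contraction on a ball of fixed radius around `(0, 0, s)`, for `s = 1` and `s = -1`. The
localization estimate places every zero in one of these two balls and gives the stated bounds
for the two fixed points.
-/

open Set

/-- The perturbed rescaled Hopf-zero vector field `X_{δ,σ}` on `ℝ³`, built from
order-three real-analytic remainders `f, g, h : ℝ⁵ → ℝ`. -/
noncomputable def Xfield (b c d α δ σ : ℝ) (f g h : (Fin 5 → ℝ) → ℝ) (p : Fin 3 → ℝ) :
    Fin 3 → ℝ :=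
  ![ p 0 * (σ - d * p 2) + (α/δ + c * p 2) * p 1
      + δ⁻¹^2 * f ![δ * p 0, δ * p 1, δ * p 2, δ, δ * σ],
     -(α/δ + c * p 2) * p 0 + p 1 * (σ - d * p 2)
      + δ⁻¹^2 * g ![δ * p 0, δ * p 1, δ * p 2, δ, δ * σ],
     -1 + b * ((p 0)^2 + (p 1)^2) + (p 2)^2
      + δ⁻¹^2 * h ![δ * p 0, δ * p 1, δ * p 2, δ, δ * σ] ]

open Filter Topology

/-! ### Order-three remainders -/

/-- A Lipschitz estimate from a power bound on the derivative near the origin. -/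
lemma lip_of_fderiv_bound {E F : Type*} [NormedAddCommGroup E] [NormedSpace ℝ E]
    [NormedAddCommGroup F] [NormedSpace ℝ F] {f : E → F} {C r : ℝ} (k : ℕ) (hC : 0 ≤ C)
    (hd : ∀ u ∈ Metric.ball (0 : E) r, DifferentiableAt ℝ f u)
    (hb : ∀ u ∈ Metric.ball (0 : E) r, ‖fderiv ℝ f u‖ ≤ C * ‖u‖ ^ k)
    {N : ℝ} (hN : N < r) {u v : E} (hu : ‖u‖ ≤ N) (hv : ‖v‖ ≤ N) :
    ‖f u - f v‖ ≤ C * N ^ k * ‖u - v‖ := by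
  have hsub : ∀ w ∈ Metric.closedBall (0 : E) N, w ∈ Metric.ball (0 : E) r :=
    fun w hw => Metric.closedBall_subset_ball hN hw
  refine (convex_closedBall (0 : E) N).norm_image_sub_le_of_norm_fderiv_le (𝕜 := ℝ)
    (fun w hw => hd w (hsub w hw)) (fun w hw => (hb w (hsub w hw)).trans ?_)
    (by simpa using hv) (by simpa using hu)
  have : ‖w‖ ≤ N := by simpa using hw
  gcongr

/-- An order-three analytic function has Lipschitz constant `O(N ^ 2)` on the ball of radius `N`:
the second derivative is `O(‖u‖)` since it is differentiable and vanishes at the origin, and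
two applications of the mean value inequality integrate this bound. -/
lemma order_three_lip {f : (Fin 5 → ℝ) → ℝ} {r₀ : ℝ} (hr₀ : 0 < r₀)
    (hf : AnalyticOnNhd ℝ f (Metric.ball 0 r₀))
    (hf3 : ∀ k : ℕ, k ≤ 2 → iteratedFDeriv ℝ k f 0 = 0) :
    ∃ C r : ℝ, 0 ≤ C ∧ 0 < r ∧ ∀ N < r, ∀ u v : Fin 5 → ℝ, ‖u‖ ≤ N → ‖v‖ ≤ N →
      |f u - f v| ≤ C * N ^ 2 * ‖u - v‖ := by
  have h0 : (0 : Fin 5 → ℝ) ∈ Metric.ball (0 : Fin 5 → ℝ) r₀ := Metric.mem_ball_self hr₀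
  have h1 : fderiv ℝ f 0 = 0 := by
    ext1 m
    have := congrArg (fun φ => φ (fun _ => m)) (hf3 1 (by norm_num))
    simpa [iteratedFDeriv_one_apply] using this
  have h2 : fderiv ℝ (fderiv ℝ f) 0 = 0 := by
    ext1 m
    ext1 m'
    have := congrArg (fun φ => φ ![m, m']) (hf3 2 le_rfl)
    rw [iteratedFDeriv_two_apply] at this
    exact this
  have hd1 := hf.fderiv
  have hd2 := hd1.fderiv
  obtain ⟨C, hC⟩ := ((hd2 0 h0).differentiableAt.isBigO_sub).bound
  obtain ⟨r, hr, hball⟩ := Metric.eventually_nhds_iff_ball.1 hC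
  have key : ∀ u ∈ Metric.ball (0 : Fin 5 → ℝ) (min r r₀),
      ‖fderiv ℝ (fderiv ℝ f) u‖ ≤ max C 0 * ‖u‖ ^ 1 := by
    intro u hu
    have := hball u (Metric.ball_subset_ball (min_le_left _ _) hu)
    rw [h2] at this
    simp only [sub_zero] at this
    rw [pow_one]
    exact this.trans (by gcongr; exact le_max_left _ _)
  have hin : ∀ u ∈ Metric.ball (0 : Fin 5 → ℝ) (min r r₀), u ∈ Metric.ball (0 : Fin 5 → ℝ) r₀ :=
    fun u hu => Metric.ball_subset_ball (min_le_right _ _) hu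
  have key2 : ∀ u ∈ Metric.ball (0 : Fin 5 → ℝ) (min r r₀),
      ‖fderiv ℝ f u‖ ≤ max C 0 * ‖u‖ ^ 2 := by
    intro u hu
    have := lip_of_fderiv_bound 1 (le_max_right C 0)
      (fun w hw => (hd1 w (hin w hw)).differentiableAt) key
      (by simpa using hu : ‖u‖ < min r r₀) (le_refl ‖u‖) (by simp : ‖(0 : Fin 5 → ℝ)‖ ≤ ‖u‖)
    rw [h1] at this
    simp only [sub_zero] at this
    calc _ ≤ _ := this
      _ = _ := by ring
  exact ⟨max C 0, min r r₀, le_max_right _ _, lt_min hr hr₀, fun N hN u v hu hv =>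
    lip_of_fderiv_bound 2 (le_max_right C 0)
      (fun w hw => (hf w (hin w hw)).differentiableAt) key2 hN hu hv⟩

/-- Size and Lipschitz bounds for a rescaled remainder `F`: it is `O(δ M ^ 3)` on the cube of
half-side `M`, for `1 ≤ M ≤ R`, and `O(δ)`-Lipschitz on the cube of half-side `2`. -/
structure SmallRem (C δ R : ℝ) (F : (Fin 3 → ℝ) → ℝ) : Prop where
  bd : ∀ M, 1 ≤ M → M ≤ R → ∀ p : Fin 3 → ℝ, (∀ i, |p i| ≤ M) → |F p| ≤ C * δ * M ^ 3
  lip : ∀ p q : Fin 3 → ℝ, (∀ i, |p i| ≤ 2) → (∀ i, |q i| ≤ 2) → |F p - F q| ≤ C * δ * ‖p - q‖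

/-- The rescaling of an order-three function satisfies `SmallRem` with `R = 1 / ε`, `δ = ε ^ 3`,
since its arguments are then `O(ε ^ 2)`. -/
lemma smallRem_rescale {f : (Fin 5 → ℝ) → ℝ} {r₀ d : ℝ} (hd : 0 < d) (hr₀ : 0 < r₀)
    (hf : AnalyticOnNhd ℝ f (Metric.ball 0 r₀))
    (hf3 : ∀ k : ℕ, k ≤ 2 → iteratedFDeriv ℝ k f 0 = 0) :
    ∃ C, 0 ≤ C ∧ ∀ C' ≥ C, ∀ᶠ ε : ℝ in 𝓝[>] 0, ∀ σ : ℝ, |σ| < d →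
      SmallRem C' (ε ^ 3) (1 / ε) (fun p => (ε ^ 3)⁻¹ ^ 2 *
        f ![ε ^ 3 * p 0, ε ^ 3 * p 1, ε ^ 3 * p 2, ε ^ 3, ε ^ 3 * σ]) := by
  obtain ⟨C, r, hC, hr, hlip⟩ := order_three_lip hr₀ hf hf3
  have hf0 : f 0 = 0 := by
    have := congrArg (fun φ => φ (fun _ => 0)) (hf3 0 (by norm_num))
    simpa using this
  refine ⟨4 * C * (1 + d) ^ 3, by positivity, fun C' hC' => ?_⟩
  have hev : ∀ᶠ ε : ℝ in 𝓝[>] 0, (1 + d) * ε ^ 2 < r := by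
    apply eventually_nhdsWithin_of_eventually_nhds
    have : ContinuousAt (fun ε : ℝ => (1 + d) * ε ^ 2) 0 := by fun_prop
    exact this.eventually_lt_const (by simpa using hr)
  have hev2 : ∀ᶠ ε : ℝ in 𝓝[>] 0, ε < 1 / 2 :=
    eventually_nhdsWithin_of_eventually_nhds (eventually_lt_nhds (by norm_num))
  filter_upwards [hev, hev2, self_mem_nhdsWithin] with ε h1 h2 h3 σ hσ
  have hε : 0 < ε := h3
  set δ := ε ^ 3 with hδ
  have hδ0 : 0 < δ := by positivity
  have hnorm : ∀ M, 1 ≤ M → ∀ p : Fin 3 → ℝ, (∀ i, |p i| ≤ M) →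
      ‖(![δ * p 0, δ * p 1, δ * p 2, δ, δ * σ] : Fin 5 → ℝ)‖ ≤ δ * ((1 + d) * M) := by
    intro M hM p hp
    have hbig : ∀ t : ℝ, |t| ≤ (1 + d) * M → ‖δ * t‖ ≤ δ * ((1 + d) * M) := by
      intro t ht
      rw [Real.norm_eq_abs, abs_mul, abs_of_pos hδ0]
      gcongr
    have hMd : M ≤ (1 + d) * M := by nlinarith
    rw [pi_norm_le_iff_of_nonneg (by positivity)]
    intro i
    fin_cases i
    · exact hbig _ ((hp 0).trans hMd)
    · exact hbig _ ((hp 1).trans hMd)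
    · exact hbig _ ((hp 2).trans hMd)
    · simpa using hbig 1 (by rw [abs_one]; linarith)
    · exact hbig σ (by nlinarith)
  have hlt : ∀ M, M ≤ 1 / ε → δ * ((1 + d) * M) < r := by
    intro M hM
    have : δ * ((1 + d) * M) ≤ δ * ((1 + d) * (1 / ε)) := by gcongr
    have e : δ * ((1 + d) * (1 / ε)) = (1 + d) * ε ^ 2 := by rw [hδ]; field_simp
    linarith
  constructor
  · intro M hM1 hMR p hp
    have := hlip _ (hlt M hMR) _ 0 (hnorm M hM1 p hp) (by simp; positivity)
    rw [hf0, sub_zero, sub_zero] at this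
    have h' := this.trans (mul_le_mul_of_nonneg_left (hnorm M hM1 p hp) (by positivity))
    rw [abs_mul, abs_of_pos (by positivity : (0 : ℝ) < δ⁻¹ ^ 2)]
    calc _ ≤ δ⁻¹ ^ 2 * (C * (δ * ((1 + d) * M)) ^ 2 * (δ * ((1 + d) * M))) := by gcongr
      _ = C * (1 + d) ^ 3 * δ * M ^ 3 := by field_simp
      _ ≤ C' * δ * M ^ 3 := by
        gcongr
        nlinarith [mul_nonneg hC (by positivity : 0 ≤ (1 + d) ^ 3)]
  · intro p q hp hq
    have h2R : (2 : ℝ) ≤ 1 / ε := by rw [le_div_iff₀ hε]; linarith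
    have := hlip _ (hlt 2 h2R) _ _ (hnorm 2 (by norm_num) p hp) (hnorm 2 (by norm_num) q hq)
    have hdiff : ‖(![δ * p 0, δ * p 1, δ * p 2, δ, δ * σ] : Fin 5 → ℝ)
        - ![δ * q 0, δ * q 1, δ * q 2, δ, δ * σ]‖ ≤ δ * ‖p - q‖ := by
      have hc : ∀ i, ‖δ * p i - δ * q i‖ ≤ δ * ‖p - q‖ := by
        intro i
        rw [← mul_sub, norm_mul, Real.norm_of_nonneg hδ0.le]
        gcongr
        exact norm_le_pi_norm (p - q) i
      rw [pi_norm_le_iff_of_nonneg (by positivity)]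
      intro i
      fin_cases i
      · exact hc 0
      · exact hc 1
      · exact hc 2
      · simp; positivity
      · simp; positivity
    have h' := this.trans (mul_le_mul_of_nonneg_left hdiff (by positivity))
    rw [← mul_sub, abs_mul, abs_of_pos (by positivity : (0 : ℝ) < δ⁻¹ ^ 2)]
    calc _ ≤ δ⁻¹ ^ 2 * (C * (δ * ((1 + d) * 2)) ^ 2 * (δ * ‖p - q‖)) := by gcongr
      _ = 4 * C * (1 + d) ^ 2 * δ * ‖p - q‖ := by field_simp; ring
      _ ≤ C' * δ * ‖p - q‖ := by
        gcongr
        have : (1 + d) ^ 2 ≤ (1 + d) ^ 3 := pow_le_pow_right₀ (by linarith) (by norm_num)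
        nlinarith [mul_le_mul_of_nonneg_left this hC]

/-! ### Contraction on a ball -/

/-- The Banach fixed point theorem on a closed ball, for contraction factor `1 / 2`. -/
lemma exists_fixed {E : Type*} [NormedAddCommGroup E] [CompleteSpace E] {T : E → E} {q₀ : E}
    {r : ℝ} (hr : 0 < r)
    (hT : ∀ p ∈ Metric.closedBall q₀ r, ∀ q ∈ Metric.closedBall q₀ r,
      ‖T p - T q‖ ≤ 1 / 2 * ‖p - q‖) (h0 : ‖T q₀ - q₀‖ ≤ r / 2) :
    ∃ p ∈ Metric.closedBall q₀ r, T p = p ∧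
      ∀ q ∈ Metric.closedBall q₀ r, T q = q → q = p := by
  have hq₀ : q₀ ∈ Metric.closedBall q₀ r := Metric.mem_closedBall_self hr.le
  have hmaps : MapsTo T (Metric.closedBall q₀ r) (Metric.closedBall q₀ r) := by
    intro p hp
    have h1 := hT p hp q₀ hq₀
    have h2 : ‖p - q₀‖ ≤ r := by simpa [dist_eq_norm] using hp
    have h3 : T p - q₀ = (T p - T q₀) + (T q₀ - q₀) := by abel
    rw [Metric.mem_closedBall, dist_eq_norm, h3]
    linarith [norm_add_le (T p - T q₀) (T q₀ - q₀)]
  have hc : ContractingWith (1 / 2) (hmaps.restrict T _ _) := by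
    refine ⟨by norm_num, LipschitzWith.of_dist_le_mul fun p q => ?_⟩
    simpa [Subtype.dist_eq, dist_eq_norm] using hT p p.2 q q.2
  obtain ⟨p, hp, hfix, -⟩ := hc.exists_fixedPoint' Metric.isClosed_closedBall.isComplete hmaps hq₀
    (edist_ne_top _ _)
  refine ⟨p, hp, hfix, fun q hq hqf => ?_⟩
  have h := hT q hq p hp
  rw [hqf, hfix.eq] at h
  have : ‖q - p‖ ≤ 0 := by linarith
  exact sub_eq_zero.1 (norm_le_zero_iff.1 this)

/-! ### The system and the smallness conditions -/

/-- `Xfield` with `α / δ` abbreviated to `a` and the rescaled remainders replaced by arbitrary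
functions `F, G, H`. -/
def absField (b c d a σ : ℝ) (F G H : (Fin 3 → ℝ) → ℝ) (p : Fin 3 → ℝ) : Fin 3 → ℝ :=
  ![p 0 * (σ - d * p 2) + (a + c * p 2) * p 1 + F p,
    -(a + c * p 2) * p 0 + p 1 * (σ - d * p 2) + G p,
    -1 + b * ((p 0) ^ 2 + (p 1) ^ 2) + (p 2) ^ 2 + H p]

/-- The smallness conditions on `ε` used in the estimates; `δ = ε ^ 3`, and `ρ` is the radius of
the balls around `(0, 0, ±1)` on which the contraction argument is run. -/
structure SmallEps (b c d K₁ C K ρ ε : ℝ) : Prop where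
  pos : 0 < ε
  half : ε ≤ 1 / 2
  lin : (2 * d + |c|) * ε ^ 2 ≤ K₁ / 2
  plane : 4 * C / K₁ * (1 + |b|) * ε ^ 3 ≤ 1
  cubic : C * ε ^ 2 ≤ 1 / 4
  loc : K * ε ^ 3 ≤ ρ
  con : (4 * |c| + 5 * d + C) * ε ^ 3 ≤ K₁ / 2
  conz : C * ε ^ 3 ≤ 1 / 4
  ini : 8 * C * ε ^ 3 ≤ ρ / 2
  ini' : 8 * C * ε ^ 3 ≤ K₁ * (ρ / 2)

lemma eventually_smallEps (b c d K₁ C K ρ : ℝ) (hK₁ : 0 < K₁) (hρ : 0 < ρ) :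
    ∀ᶠ ε : ℝ in 𝓝[>] 0, SmallEps b c d K₁ C K ρ ε := by
  have key : ∀ (A B : ℝ) (k : ℕ), k ≠ 0 → 0 < B → ∀ᶠ ε : ℝ in 𝓝[>] 0, A * ε ^ k ≤ B := by
    intro A B k hk hB
    apply eventually_nhdsWithin_of_eventually_nhds
    have : ContinuousAt (fun ε : ℝ => A * ε ^ k) 0 := by fun_prop
    exact (this.eventually_lt_const (by simpa [hk] using hB)).mono fun _ h => h.le
  filter_upwards [self_mem_nhdsWithin, key 1 (1 / 2) 1 (by norm_num) (by norm_num),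
    key (2 * d + |c|) (K₁ / 2) 2 (by norm_num) (by positivity),
    key (4 * C / K₁ * (1 + |b|)) 1 3 (by norm_num) (by positivity),
    key C (1 / 4) 2 (by norm_num) (by positivity),
    key K ρ 3 (by norm_num) (by positivity),
    key (4 * |c| + 5 * d + C) (K₁ / 2) 3 (by norm_num) (by positivity),
    key C (1 / 4) 3 (by norm_num) (by positivity),
    key (8 * C) (ρ / 2) 3 (by norm_num) (by positivity),
    key (8 * C) (K₁ * (ρ / 2)) 3 (by norm_num) (by positivity)]
    with ε h1 h2 h3 h4 h5 h6 h7 h8 h9 h10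
  exact ⟨h1, by simpa using h2, h3, h4, h5, h6, h7, h8, h9, h10⟩

/-! ### Localization of the zeros -/

/-- A bound on the first two coordinates of a zero in terms of the remainders, obtained by
solving the first two equations for the large rotation terms `a * x`, `a * y`. -/
lemma plane_bound {c d a K₁ δ R σ x y z Fv Gv B : ℝ} (hd : 0 < d) (hδ : 0 < δ)
    (hR : 1 ≤ R) (hσ : |σ| < d) (ha : K₁ ≤ a * δ)
    (hz : |z| ≤ R) (hlin : (2 * d + |c|) * (δ * R) ≤ K₁ / 2)
    (e1 : x * (σ - d * z) + (a + c * z) * y + Fv = 0)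
    (e2 : -(a + c * z) * x + y * (σ - d * z) + Gv = 0) (hF : |Fv| ≤ B) (hG : |Gv| ≤ B) :
    K₁ * (|x| + |y|) ≤ 4 * B * δ := by
  have hsz : |σ - d * z| ≤ 2 * d * R := by
    calc _ ≤ |σ| + |d * z| := abs_sub _ _
      _ ≤ d * R + d * R := by
        rw [abs_mul, abs_of_pos hd]
        have := mul_le_mul_of_nonneg_left hz hd.le
        nlinarith
      _ = _ := by ring
  have hcz : |c * z| ≤ |c| * R := by rw [abs_mul]; gcongr
  -- both equations have the shape `a * w = ± (...)`
  have gen : ∀ w w' V : ℝ, |V| ≤ B → (a * w = w' * (σ - d * z) - c * z * w + V ∨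
      a * w = -(w' * (σ - d * z)) - c * z * w - V) →
      K₁ * |w| ≤ δ * (2 * d * R * |w'| + |c| * R * |w| + B) := by
    intro w w' V hV hw
    have h1 : |a * w| ≤ 2 * d * R * |w'| + |c| * R * |w| + B := by
      have i1 : |w' * (σ - d * z)| ≤ 2 * d * R * |w'| := by
        rw [abs_mul, mul_comm]; gcongr
      have i2 : |c * z * w| ≤ |c| * R * |w| := by rw [abs_mul]; gcongr
      rw [abs_le] at i1 i2 hV ⊢
      rcases hw with hw | hw <;> constructor <;> linarith [i1.1, i1.2, i2.1, i2.2, hV.1, hV.2]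
    calc K₁ * |w| ≤ a * δ * |w| := by gcongr
      _ ≤ |a| * δ * |w| := by gcongr; exact le_abs_self a
      _ = δ * |a * w| := by rw [abs_mul]; ring
      _ ≤ _ := by gcongr
  have hx := gen x y Gv hG (Or.inl (by linarith))
  have hy := gen y x Fv hF (Or.inr (by linarith))
  have hs : (2 * d + |c|) * (δ * R) * (|x| + |y|) ≤ K₁ / 2 * (|x| + |y|) := by gcongr
  nlinarith

/-- A priori estimate: every zero in the large ball is close to `(0, 0, 1)` or `(0, 0, -1)`. -/
lemma apriori {b c d a K₁ C K ρ ε σ : ℝ} {F G H : (Fin 3 → ℝ) → ℝ} (hd : 0 < d)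
    (hK₁ : 0 < K₁) (hC : 0 ≤ C) (hK : K = 32 * C / K₁ + |b| * (4 * C / K₁) + 8 * C + 1)
    (hε : SmallEps b c d K₁ C K ρ ε) (hσ : |σ| < d) (ha : K₁ ≤ a * ε ^ 3)
    (hF : SmallRem C (ε ^ 3) (1 / ε) F) (hG : SmallRem C (ε ^ 3) (1 / ε) G)
    (hH : SmallRem C (ε ^ 3) (1 / ε) H) {p : Fin 3 → ℝ}
    (hp : |p 0| + |p 1| + |p 2| ≤ 1 / ε) (hX : absField b c d a σ F G H p = 0) :
    |p 0| ≤ K * (ε ^ 3) ^ 2 ∧ |p 1| ≤ K * (ε ^ 3) ^ 2 ∧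
      (|p 2 - 1| ≤ K * ε ^ 3 ∨ |p 2 + 1| ≤ K * ε ^ 3) := by
  have h0 := hε.pos
  have hδ : 0 < ε ^ 3 := by positivity
  have hR2 : 2 ≤ 1 / ε := by rw [le_div_iff₀ h0]; linarith [hε.half]
  have hδR : ε ^ 3 * (1 / ε) = ε ^ 2 := by field_simp
  have hδR3 : ε ^ 3 * (1 / ε) ^ 3 = 1 := by field_simp
  have e1 := congrFun hX 0
  have e2 := congrFun hX 1
  have e3 := congrFun hX 2
  simp only [absField, Matrix.cons_val, Pi.zero_apply] at e1 e2 e3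
  have a0 := abs_nonneg (p 0)
  have a1 := abs_nonneg (p 1)
  have a2 := abs_nonneg (p 2)
  have hz : |p 2| ≤ 1 / ε := by linarith
  have plane : ∀ M, 1 ≤ M → M ≤ 1 / ε → (∀ i, |p i| ≤ M) →
      |p 0| + |p 1| ≤ 4 * C / K₁ * (ε ^ 3 * M ^ 3) * ε ^ 3 := by
    intro M h1 h2 h3
    have := plane_bound hd hδ (by linarith) hσ ha hz (by rw [hδR]; exact hε.lin) e1 e2
      (hF.bd M h1 h2 p h3) (hG.bd M h1 h2 p h3)
    calc |p 0| + |p 1| ≤ 4 * (C * ε ^ 3 * M ^ 3) * ε ^ 3 / K₁ := by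
          rw [le_div_iff₀ hK₁]; linarith
      _ = _ := by ring
  -- a first, coarse bound on `(x, y)`, from the largest admissible cube
  have s1 : |p 0| + |p 1| ≤ 4 * C / K₁ * ε ^ 3 := by
    have := plane (1 / ε) (by linarith) le_rfl (by
      intro i; fin_cases i <;> simp only [Fin.zero_eta, Fin.mk_one, Fin.reduceFinMk] <;> linarith)
    rwa [hδR3, mul_one] at this
  have hCK : 0 ≤ 4 * C / K₁ := by positivity
  have s2 : (1 + |b|) * (|p 0| + |p 1|) ≤ 1 := by
    have := mul_le_mul_of_nonneg_left s1 (by positivity : 0 ≤ 1 + |b|)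
    linarith [hε.plane]
  have hb0 := abs_nonneg b
  have s3 : |p 0| + |p 1| ≤ 1 := by nlinarith
  have sb : |b * ((p 0) ^ 2 + (p 1) ^ 2)| ≤ |b| * (|p 0| + |p 1|) := by
    rw [abs_mul, abs_of_nonneg (by positivity : 0 ≤ (p 0) ^ 2 + (p 1) ^ 2),
      ← sq_abs (p 0), ← sq_abs (p 1)]
    gcongr <;> nlinarith
  have sb1 : |b| * (|p 0| + |p 1|) ≤ 1 := by linarith
  have z2 : |p 2| ≤ 2 := by
    by_contra! hlt
    have := hH.bd |p 2| (by linarith) hz p (by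
      intro i; fin_cases i <;> simp only [Fin.zero_eta, Fin.mk_one, Fin.reduceFinMk] <;> linarith)
    have hcub : C * ε ^ 3 * |p 2| ^ 3 ≤ 1 / 4 * |p 2| ^ 2 := by
      calc _ = C * ε ^ 3 * |p 2| ^ 2 * |p 2| := by ring
        _ ≤ C * ε ^ 3 * |p 2| ^ 2 * (1 / ε) := by gcongr
        _ = C * ε ^ 2 * |p 2| ^ 2 := by field_simp
        _ ≤ _ := by have := hε.cubic; gcongr
    rw [← sq_abs (p 2)] at e3
    have l1 := (abs_le.1 sb).1
    have l2 := (abs_le.1 this).1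
    nlinarith
  have hp2 : ∀ i, |p i| ≤ 2 := by
    intro i; fin_cases i <;> simp only [Fin.zero_eta, Fin.mk_one, Fin.reduceFinMk] <;> linarith
  have s4 := plane 2 (by norm_num) hR2 hp2
  have s5 : |p 0| + |p 1| ≤ K * (ε ^ 3) ^ 2 := by
    calc _ ≤ _ := s4
      _ = 32 * C / K₁ * (ε ^ 3) ^ 2 := by ring
      _ ≤ _ := by
        gcongr
        rw [hK]
        have : 0 ≤ |b| * (4 * C / K₁) := by positivity
        linarith
  refine ⟨by linarith, by linarith, ?_⟩
  have hHb := hH.bd 2 (by norm_num) hR2 p hp2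
  have hzz : |(p 2 - 1) * (p 2 + 1)| ≤ K * ε ^ 3 := by
    have : (p 2 - 1) * (p 2 + 1) = -(b * ((p 0) ^ 2 + (p 1) ^ 2)) - H p := by linarith
    rw [this]
    calc _ ≤ |b * ((p 0) ^ 2 + (p 1) ^ 2)| + |H p| := by
          rw [← abs_neg (b * _)]; exact abs_sub _ _
      _ ≤ |b| * (4 * C / K₁ * ε ^ 3) + C * ε ^ 3 * 2 ^ 3 := by
        have := mul_le_mul_of_nonneg_left s1 hb0
        linarith
      _ = (|b| * (4 * C / K₁) + 8 * C) * ε ^ 3 := by ring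
      _ ≤ _ := by
        gcongr
        rw [hK]
        have : 0 ≤ 32 * C / K₁ := by positivity
        linarith
  rw [abs_mul] at hzz
  rcases le_total 0 (p 2) with h | h
  · left
    have : 1 ≤ |p 2 + 1| := by rw [abs_of_nonneg] <;> linarith
    exact (le_mul_of_one_le_right (abs_nonneg _) this).trans hzz
  · right
    have : 1 ≤ |p 2 - 1| := by rw [abs_of_nonpos] <;> linarith
    exact (le_mul_of_one_le_left (abs_nonneg _) this).trans hzz

/-! ### The contraction near `(0, 0, ±1)` -/

/-- The map whose fixed points are the zeros of `absField` and which contracts near `(0, 0, s)`,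
`s = ±1`: the first two equations are solved for the rotation terms, and the third is treated by
the simplified Newton step with slope `2 * s`. -/
noncomputable def newtonMap (b c d a σ s : ℝ) (F G H : (Fin 3 → ℝ) → ℝ) (p : Fin 3 → ℝ) :
    Fin 3 → ℝ :=
  ![a⁻¹ * (-(c * (p 2 * p 0)) + σ * p 1 - d * (p 1 * p 2) + G p),
    -(a⁻¹ * (σ * p 0 - d * (p 0 * p 2) + c * (p 2 * p 1) + F p)),
    p 2 - s / 2 * (-1 + b * ((p 0) ^ 2 + (p 1) ^ 2) + (p 2) ^ 2 + H p)]

lemma newtonMap_fixed_iff {b c d a σ s : ℝ} {F G H : (Fin 3 → ℝ) → ℝ} {p : Fin 3 → ℝ}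
    (ha : a ≠ 0) (hs : s ≠ 0) :
    newtonMap b c d a σ s F G H p = p ↔ absField b c d a σ F G H p = 0 := by
  simp only [funext_iff, Fin.forall_fin_succ, newtonMap, absField]
  simp only [Matrix.cons_val, Fin.succ_zero_eq_one, Fin.succ_one_eq_two, Pi.zero_apply,
    Matrix.cons_val_zero]
  have e1 : ∀ V : ℝ, a⁻¹ * V = p 0 ↔ V = a * p 0 := fun V => by
    rw [inv_mul_eq_iff_eq_mul₀ ha]
  have e2 : ∀ V : ℝ, -(a⁻¹ * V) = p 1 ↔ V = -(a * p 1) := fun V => by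
    rw [neg_eq_iff_eq_neg, inv_mul_eq_iff_eq_mul₀ ha, mul_neg]
  have e3 : ∀ V : ℝ, p 2 - s / 2 * V = p 2 ↔ V = 0 := fun V => by
    simp [hs]
  rw [e1, e2, e3]
  constructor
  · rintro ⟨h1, h2, h3, -⟩
    exact ⟨by linarith, by linarith, h3, by simp⟩
  · rintro ⟨h1, h2, h3, -⟩
    exact ⟨by linarith, by linarith, h3, by simp⟩

lemma abs_mul_sub_mul_le {x y x' y' A D : ℝ} (hx : |x| ≤ A) (hy' : |y'| ≤ A)
    (h1 : |x - x'| ≤ D) (h2 : |y - y'| ≤ D) : |x * y - x' * y'| ≤ 2 * A * D := by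
  have hA : 0 ≤ A := (abs_nonneg x).trans hx
  have : x * y - x' * y' = x * (y - y') + (x - x') * y' := by ring
  rw [this]
  calc _ ≤ |x| * |y - y'| + |x - x'| * |y'| := by
        rw [← abs_mul, ← abs_mul]; exact abs_add_le _ _
    _ ≤ A * D + D * A := by gcongr; exact (abs_nonneg _).trans h1
    _ = _ := by ring

/-- Near each of `(0, 0, ±1)` there is exactly one zero. -/
lemma local_zero {b c d a K₁ C K ρ ε σ s : ℝ} {F G H : (Fin 3 → ℝ) → ℝ} (hd : 0 < d)
    (hK₁ : 0 < K₁) (hC : 0 ≤ C) (hρ : 0 < ρ) (hρ1 : ρ ≤ 1 / 8) (hρb : ρ * |b| ≤ 1 / 8)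
    (hε : SmallEps b c d K₁ C K ρ ε) (hσ : |σ| < d) (ha : K₁ ≤ a * ε ^ 3)
    (hF : SmallRem C (ε ^ 3) (1 / ε) F) (hG : SmallRem C (ε ^ 3) (1 / ε) G)
    (hH : SmallRem C (ε ^ 3) (1 / ε) H) (hs : s = 1 ∨ s = -1) :
    ∃ p ∈ Metric.closedBall (![0, 0, s] : Fin 3 → ℝ) ρ, absField b c d a σ F G H p = 0 ∧
      ∀ q ∈ Metric.closedBall (![0, 0, s] : Fin 3 → ℝ) ρ,
        absField b c d a σ F G H q = 0 → q = p := by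
  have h0 := hε.pos
  have hδ : 0 < ε ^ 3 := by positivity
  have hδ1 : ε ^ 3 ≤ 1 := pow_le_one₀ h0.le (by linarith [hε.half])
  have ha0 : 0 < a := pos_of_mul_pos_left (lt_of_lt_of_le hK₁ ha) hδ.le
  have hR2 : 2 ≤ 1 / ε := by rw [le_div_iff₀ h0]; linarith [hε.half]
  have hs0 : s ≠ 0 := by rcases hs with rfl | rfl <;> norm_num
  have hs1 : |s| = 1 := by rcases hs with rfl | rfl <;> norm_num
  have hss : s * s = 1 := by rcases hs with rfl | rfl <;> norm_num
  have hainv : a⁻¹ ≤ ε ^ 3 / K₁ := by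
    rw [inv_le_comm₀ ha0 (by positivity), inv_div, div_le_iff₀ hδ]; exact ha
  have ainv0 : 0 < a⁻¹ := by positivity
  have hmem : ∀ p ∈ Metric.closedBall (![0, 0, s] : Fin 3 → ℝ) ρ,
      |p 0| ≤ ρ ∧ |p 1| ≤ ρ ∧ |p 2 - s| ≤ ρ ∧ ∀ i, |p i| ≤ 2 := by
    intro p hp
    rw [Metric.mem_closedBall, dist_eq_norm, pi_norm_le_iff_of_nonneg hρ.le] at hp
    have i0 : |p 0| ≤ ρ := by simpa using hp 0
    have i1 : |p 1| ≤ ρ := by simpa using hp 1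
    have i2 : |p 2 - s| ≤ ρ := by simpa using hp 2
    have i3 : |p 2| ≤ 2 := by
      have := abs_sub_abs_le_abs_sub (p 2) s
      linarith
    refine ⟨i0, i1, i2, ?_⟩
    intro i; fin_cases i <;> simp only [Fin.zero_eta, Fin.mk_one, Fin.reduceFinMk] <;> linarith
  have contr : ∀ p ∈ Metric.closedBall (![0, 0, s] : Fin 3 → ℝ) ρ,
      ∀ q ∈ Metric.closedBall (![0, 0, s] : Fin 3 → ℝ) ρ,
      ‖newtonMap b c d a σ s F G H p - newtonMap b c d a σ s F G H q‖ ≤ 1 / 2 * ‖p - q‖ := by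
    intro p hp q hq
    obtain ⟨p0, p1, p2, pp⟩ := hmem p hp
    obtain ⟨q0, q1, q2, qq⟩ := hmem q hq
    have hD : ∀ i, |p i - q i| ≤ ‖p - q‖ := fun i => norm_le_pi_norm (p - q) i
    have hFl := hF.lip p q pp qq
    have hGl := hG.lip p q pp qq
    have hHl := hH.lip p q pp qq
    set D := ‖p - q‖
    have hD0 : 0 ≤ D := norm_nonneg _
    have scale : ∀ V : ℝ, |V| ≤ (4 * |c| + 5 * d + C) * D → |a⁻¹ * V| ≤ 1 / 2 * D := by
      intro V hV
      rw [abs_mul, abs_of_pos ainv0]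
      calc _ ≤ ε ^ 3 / K₁ * ((4 * |c| + 5 * d + C) * D) := by gcongr
        _ = (4 * |c| + 5 * d + C) * ε ^ 3 / K₁ * D := by ring
        _ ≤ K₁ / 2 / K₁ * D := by have := hε.con; gcongr
        _ = _ := by field_simp
    have hCδ : C * ε ^ 3 * D ≤ C * D := by nlinarith [mul_nonneg hC hD0]
    have t1 : ∀ i j, |c * (p i * p j - q i * q j)| ≤ 4 * |c| * D := by
      intro i j
      rw [abs_mul]
      have := mul_le_mul_of_nonneg_left
        (abs_mul_sub_mul_le (pp i) (qq j) (hD i) (hD j)) (abs_nonneg c)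
      linarith
    have t2 : ∀ i j, |d * (p i * p j - q i * q j)| ≤ 4 * d * D := by
      intro i j
      rw [abs_mul, abs_of_pos hd]
      have := mul_le_mul_of_nonneg_left
        (abs_mul_sub_mul_le (pp i) (qq j) (hD i) (hD j)) hd.le
      linarith
    have t3 : ∀ i, |σ * (p i - q i)| ≤ d * D := by
      intro i
      rw [abs_mul]
      exact mul_le_mul hσ.le (hD i) (abs_nonneg _) hd.le
    rw [pi_norm_le_iff_of_nonneg (by positivity)]
    intro i
    fin_cases i
    · simp only [newtonMap, Pi.sub_apply, Real.norm_eq_abs, Fin.zero_eta, Matrix.cons_val]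
      rw [← mul_sub]
      apply scale
      have u1 := abs_le.1 (t1 2 0)
      have u2 := abs_le.1 (t2 1 2)
      have u3 := abs_le.1 (t3 1)
      have u4 := abs_le.1 hGl
      rw [abs_le]
      constructor <;> linarith [u1.1, u1.2, u2.1, u2.2, u3.1, u3.2, u4.1, u4.2]
    · simp only [newtonMap, Pi.sub_apply, Real.norm_eq_abs, Fin.mk_one, Matrix.cons_val]
      rw [← neg_sub', abs_neg, ← mul_sub]
      apply scale
      have u1 := abs_le.1 (t1 2 1)
      have u2 := abs_le.1 (t2 0 2)
      have u3 := abs_le.1 (t3 0)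
      have u4 := abs_le.1 hFl
      rw [abs_le]
      constructor <;> linarith [u1.1, u1.2, u2.1, u2.2, u3.1, u3.2, u4.1, u4.2]
    · simp only [newtonMap, Pi.sub_apply, Real.norm_eq_abs, Fin.reduceFinMk, Matrix.cons_val]
      -- `s ^ 2 = 1` makes the `z`-slope `1 - s (z + z') / 2` small near `z = z' = s`
      have split : p 2 - s / 2 * (-1 + b * (p 0 ^ 2 + p 1 ^ 2) + p 2 ^ 2 + H p) -
          (q 2 - s / 2 * (-1 + b * (q 0 ^ 2 + q 1 ^ 2) + q 2 ^ 2 + H q)) =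
          -(s * (((p 2 - s) + (q 2 - s)) / 2 * (p 2 - q 2)
            + (b * ((p 0 * p 0 - q 0 * q 0) + (p 1 * p 1 - q 1 * q 1)) + (H p - H q)) / 2)) := by
        linear_combination (q 2 - p 2) * hss
      rw [split, abs_neg, abs_mul, hs1, one_mul]
      have v1 : |((p 2 - s) + (q 2 - s)) / 2 * (p 2 - q 2)| ≤ 1 / 8 * D := by
        rw [abs_mul]
        refine mul_le_mul ?_ (hD 2) (abs_nonneg _) (by norm_num)
        rw [abs_le] at p2 q2 ⊢
        constructor <;> linarith [p2.1, p2.2, q2.1, q2.2]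
      have v2 : |b * ((p 0 * p 0 - q 0 * q 0) + (p 1 * p 1 - q 1 * q 1))| ≤ 1 / 2 * D := by
        rw [abs_mul]
        have w0 := abs_mul_sub_mul_le p0 q0 (hD 0) (hD 0)
        have w1 := abs_mul_sub_mul_le p1 q1 (hD 1) (hD 1)
        calc _ ≤ |b| * (2 * ρ * D + 2 * ρ * D) := by
              gcongr; exact (abs_add_le _ _).trans (add_le_add w0 w1)
          _ = 4 * (ρ * |b|) * D := by ring
          _ ≤ 4 * (1 / 8) * D := by gcongr
          _ = _ := by ring
      have v3 : C * ε ^ 3 * D ≤ 1 / 4 * D := by have := hε.conz; gcongr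
      have u1 := abs_le.1 v1
      have u2 := abs_le.1 v2
      have u3 := abs_le.1 hHl
      rw [abs_le]
      constructor <;> linarith [u1.1, u1.2, u2.1, u2.2, u3.1, u3.2]
  have start : ‖newtonMap b c d a σ s F G H ![0, 0, s] - ![0, 0, s]‖ ≤ ρ / 2 := by
    have hq := (hmem ![0, 0, s] (Metric.mem_closedBall_self hρ.le)).2.2.2
    have bF := hF.bd 2 (by norm_num) hR2 _ hq
    have bG := hG.bd 2 (by norm_num) hR2 _ hq
    have bH := hH.bd 2 (by norm_num) hR2 _ hq
    have scale : ∀ V : ℝ, |V| ≤ C * ε ^ 3 * 2 ^ 3 → |a⁻¹ * V| ≤ ρ / 2 := by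
      intro V hV
      rw [abs_mul, abs_of_pos ainv0]
      calc _ ≤ ε ^ 3 / K₁ * (C * ε ^ 3 * 2 ^ 3) := by gcongr
        _ = ε ^ 3 * (8 * C * ε ^ 3 / K₁) := by ring
        _ ≤ 1 * (K₁ * (ρ / 2) / K₁) := by have := hε.ini'; gcongr
        _ = _ := by field_simp
    rw [pi_norm_le_iff_of_nonneg (by positivity)]
    intro i
    fin_cases i
    · simpa [newtonMap] using scale _ bG
    · simpa [newtonMap] using scale _ bF
    · have : newtonMap b c d a σ s F G H ![0, 0, s] 2 - s = -(s * (H ![0, 0, s] / 2)) := by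
        simp only [newtonMap, Matrix.cons_val]
        linear_combination (-s / 2) * hss
      change |newtonMap b c d a σ s F G H ![0, 0, s] 2 - s| ≤ ρ / 2
      rw [this, abs_neg, abs_mul, hs1, one_mul, abs_div, abs_two]
      have := hε.ini
      have := abs_nonneg (H ![0, 0, s])
      linarith
  obtain ⟨p, hp, hfix, huniq⟩ := exists_fixed hρ contr start
  refine ⟨p, hp, (newtonMap_fixed_iff ha0.ne' hs0).1 hfix, fun q hq hq0 => ?_⟩
  exact huniq q hq ((newtonMap_fixed_iff ha0.ne' hs0).2 hq0)

/-! ### Assembling the estimates -/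

/-- For small `δ`, `X_{δ,σ}` has exactly two zeros in the ball of radius `δ^{-1/3}`;
they are `O(δ²)`-close in `(x,y)` and `O(δ)`-close in `z` to `(0,0,±1)`.
Here `|(x,y,z)| = |x| + |y| + |z|`, and the constants are uniform in `σ` with `|σ| < d`
and in `α ∈ [K₁, K₂]`. -/
theorem exists_two_critical_points
    (b c d K₁ K₂ r₀ : ℝ) (hd : 0 < d) (hK₁ : 0 < K₁) (hK₁₂ : K₁ ≤ K₂) (hr₀ : 0 < r₀)
    (f g h : (Fin 5 → ℝ) → ℝ)
    (hf : AnalyticOnNhd ℝ f (Metric.ball 0 r₀)) (hg : AnalyticOnNhd ℝ g (Metric.ball 0 r₀))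
    (hh : AnalyticOnNhd ℝ h (Metric.ball 0 r₀))
    (hf3 : ∀ k : ℕ, k ≤ 2 → iteratedFDeriv ℝ k f 0 = 0)
    (hg3 : ∀ k : ℕ, k ≤ 2 → iteratedFDeriv ℝ k g 0 = 0)
    (hh3 : ∀ k : ℕ, k ≤ 2 → iteratedFDeriv ℝ k h 0 = 0) :
    ∃ δ₀ K : ℝ, 0 < δ₀ ∧ 0 < K ∧
      ∀ δ : ℝ, δ ∈ Ioo 0 δ₀ → ∀ σ : ℝ, |σ| < d → ∀ α : ℝ, α ∈ Icc K₁ K₂ →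
        ∃ Sp Sm : Fin 3 → ℝ,
          Sp ≠ Sm ∧
          |Sp 0| + |Sp 1| + |Sp 2| ≤ δ ^ (-(1:ℝ)/3) ∧
          |Sm 0| + |Sm 1| + |Sm 2| ≤ δ ^ (-(1:ℝ)/3) ∧
          Xfield b c d α δ σ f g h Sp = 0 ∧
          Xfield b c d α δ σ f g h Sm = 0 ∧
          |Sp 0| ≤ K * δ^2 ∧ |Sp 1| ≤ K * δ^2 ∧ |Sp 2 - 1| ≤ K * δ ∧
          |Sm 0| ≤ K * δ^2 ∧ |Sm 1| ≤ K * δ^2 ∧ |Sm 2 + 1| ≤ K * δ ∧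
          (∀ p : Fin 3 → ℝ, |p 0| + |p 1| + |p 2| ≤ δ ^ (-(1:ℝ)/3) →
            Xfield b c d α δ σ f g h p = 0 → p = Sp ∨ p = Sm) := by
  obtain ⟨Cf, hCf, hf'⟩ := smallRem_rescale hd hr₀ hf hf3
  obtain ⟨Cg, hCg, hg'⟩ := smallRem_rescale hd hr₀ hg hg3
  obtain ⟨Ch, hCh, hh'⟩ := smallRem_rescale hd hr₀ hh hh3
  obtain ⟨C, hC⟩ : ∃ C, C = Cf + Cg + Ch := ⟨_, rfl⟩
  have hC0 : 0 ≤ C := by linarith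
  obtain ⟨K, hK⟩ : ∃ K, K = 32 * C / K₁ + |b| * (4 * C / K₁) + 8 * C + 1 := ⟨_, rfl⟩
  have hKpos : 0 < K := by rw [hK]; positivity
  obtain ⟨ρ, hρe⟩ : ∃ ρ : ℝ, ρ = 1 / (8 * (1 + |b|)) := ⟨_, rfl⟩
  have hb0 := abs_nonneg b
  have hρ : 0 < ρ := by rw [hρe]; positivity
  have hρ1 : ρ ≤ 1 / 8 := by
    rw [hρe, div_le_div_iff₀ (by positivity) (by norm_num)]; linarith
  have hρb : ρ * |b| ≤ 1 / 8 := by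
    rw [hρe, div_mul_eq_mul_div, div_le_div_iff₀ (by positivity) (by norm_num)]; linarith
  obtain ⟨u, hu, hsub⟩ := mem_nhdsGT_iff_exists_Ioo_subset.1
    (((hf' C (by linarith)).and ((hg' C (by linarith)).and (hh' C (by linarith)))).and
      (eventually_smallEps b c d K₁ C K ρ hK₁ hρ))
  have hu0 : (0 : ℝ) < u := hu
  refine ⟨u ^ 3, K, by positivity, hKpos, fun δ hδ σ hσ α hα => ?_⟩
  have hδ0 : 0 < δ := hδ.1
  obtain ⟨ε, hεe⟩ : ∃ ε : ℝ, ε = δ ^ ((1 : ℝ) / 3) := ⟨_, rfl⟩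
  have hε0 : 0 < ε := by rw [hεe]; positivity
  have hε3 : δ = ε ^ 3 := by
    rw [hεe, ← Real.rpow_natCast, ← Real.rpow_mul hδ0.le]; norm_num
  have hR : δ ^ (-(1 : ℝ) / 3) = 1 / ε := by
    rw [hεe, neg_div, Real.rpow_neg hδ0.le, one_div (δ ^ _)]
  have hεu : ε < u := lt_of_pow_lt_pow_left₀ 3 hu0.le (by rw [← hε3]; exact hδ.2)
  obtain ⟨⟨hF, hG, hH⟩, hS⟩ := hsub ⟨hε0, hεu⟩
  have hF := hF σ hσ
  have hG := hG σ hσ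
  have hH := hH σ hσ
  rw [hR]
  subst hε3
  have ha : K₁ ≤ α / ε ^ 3 * ε ^ 3 := by rw [div_mul_cancel₀ _ hδ0.ne']; exact hα.1
  have h2R : (2 : ℝ) ≤ 1 / ε := by rw [le_div_iff₀ hε0]; linarith [hS.half]
  have hδ1 : ε ^ 3 ≤ 1 := pow_le_one₀ hε0.le (by linarith [hS.half])
  have hbig : ∀ s : ℝ, |s| = 1 → ∀ p ∈ Metric.closedBall (![0, 0, s] : Fin 3 → ℝ) ρ,
      |p 0| + |p 1| + |p 2| ≤ 1 / ε ∧ |p 2 - s| ≤ 1 / 8 := by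
    intro s hs p hp
    rw [Metric.mem_closedBall, dist_eq_norm, pi_norm_le_iff_of_nonneg hρ.le] at hp
    have i0 : |p 0| ≤ ρ := by simpa using hp 0
    have i1 : |p 1| ≤ ρ := by simpa using hp 1
    have i2 : |p 2 - s| ≤ ρ := by simpa using hp 2
    have := abs_sub_abs_le_abs_sub (p 2) s
    exact ⟨by linarith, by linarith⟩
  have hin : ∀ (s : ℝ) (p : Fin 3 → ℝ), |p 0| ≤ K * (ε ^ 3) ^ 2 → |p 1| ≤ K * (ε ^ 3) ^ 2 →
      |p 2 - s| ≤ K * ε ^ 3 → p ∈ Metric.closedBall (![0, 0, s] : Fin 3 → ℝ) ρ := by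
    intro s p i0 i1 i2
    have hle : K * (ε ^ 3) ^ 2 ≤ K * ε ^ 3 := by gcongr; nlinarith
    have := hS.loc
    rw [Metric.mem_closedBall, dist_eq_norm, pi_norm_le_iff_of_nonneg hρ.le]
    intro i
    fin_cases i
    · simpa using i0.trans (hle.trans this)
    · simpa using i1.trans (hle.trans this)
    · simpa using i2.trans this
  obtain ⟨Sp, hSp, zSp, uSp⟩ := local_zero hd hK₁ hC0 hρ hρ1 hρb hS hσ ha hF hG hH (Or.inl rfl)
  obtain ⟨Sm, hSm, zSm, uSm⟩ := local_zero hd hK₁ hC0 hρ hρ1 hρb hS hσ ha hF hG hH (Or.inr rfl)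
  obtain ⟨bp, bp'⟩ := hbig 1 (by norm_num) Sp hSp
  obtain ⟨bm, bm'⟩ := hbig (-1) (by norm_num) Sm hSm
  obtain ⟨p0, p1, p2⟩ := apriori hd hK₁ hC0 hK hS hσ ha hF hG hH bp zSp
  obtain ⟨m0, m1, m2⟩ := apriori hd hK₁ hC0 hK hS hσ ha hF hG hH bm zSm
  have hloc := hS.loc
  rw [abs_le] at bp' bm'
  refine ⟨Sp, Sm, ?_, bp, bm, zSp, zSm, p0, p1, ?_, m0, m1, ?_, ?_⟩
  · intro h
    rw [h] at bp'
    linarith [bp'.1, bm'.2]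
  · refine p2.resolve_right fun h => ?_
    have := (abs_le.1 h).2
    linarith [bp'.1]
  · refine m2.resolve_left fun h => ?_
    have := (abs_le.1 h).1
    linarith [bm'.2]
  · intro p hp hX
    obtain ⟨q0, q1, q2⟩ := apriori hd hK₁ hC0 hK hS hσ ha hF hG hH hp hX
    rcases q2 with q2 | q2
    · exact Or.inl (uSp p (hin 1 p q0 q1 q2) hX)
    · exact Or.inr (uSm p (hin (-1) p q0 q1 (by rwa [sub_neg_eq_add])) hX)
end

section
/- Let E be a complex Banach space, let r > 0 and 0 < θ < 1/2, and let f : B_r → E be holomorphic (analytic) on the open ball B_r = {x ∈ E : ‖x‖ < r} with f(B_r) ⊆ B_{θr}. Then the restriction of f to B_{θr} maps B_{θr} into B_{θr} and is a contraction (it is Lipschitz on B_{θr} with some Lipschitz constant strictly less than 1); consequently f has a unique fixed point in B_{θr}. -/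
/-!
For `‖c‖ ≤ θ r < r / 2`, the closed ball of radius `r / 2` about `c` lies inside `B_r`, where `f` is
bounded by `θ r`. Cauchy's estimate on complex lines through `c` gives `‖f'(c)‖ ≤ 2 θ < 1`
(`norm_fderiv_le_two_mul`), so the mean value inequality makes `f` a `2 θ`-contraction on the
*closed* ball of radius `θ r`. That ball is complete and `f` maps it into the open ball, so
Banach's theorem gives a fixed point, which lies in the open ball.
-/

/-- Cauchy's estimate on the complex lines `z ↦ c + z • v`, with circles of radius `r / 2 / ‖v‖`. -/
theorem norm_fderiv_le_two_mul
    {E : Type*} [NormedAddCommGroup E] [NormedSpace ℂ E] [CompleteSpace E]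
    {r θ : ℝ} (hr : 0 < r) (hθ₀ : 0 < θ) (hθ : θ < 1/2)
    {f : E → E} (hf : AnalyticOnNhd ℂ f (Metric.ball 0 r))
    (hmaps : Set.MapsTo f (Metric.ball 0 r) (Metric.ball 0 (θ * r)))
    {c : E} (hc : ‖c‖ ≤ θ * r) : ‖fderiv ℂ f c‖ ≤ 2 * θ := by
  have hθr : θ * r < r / 2 := by nlinarith
  refine ContinuousLinearMap.opNorm_le_bound _ (by positivity) fun v => ?_
  rcases eq_or_ne v 0 with rfl | hv
  · simp
  have hv' : 0 < ‖v‖ := norm_pos_iff.2 hv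
  have hmem : ∀ z ∈ Metric.closedBall (0 : ℂ) (r / 2 / ‖v‖), c + z • v ∈ Metric.ball (0 : E) r := by
    intro z hz
    rw [mem_closedBall_zero_iff, le_div_iff₀ hv'] at hz
    rw [mem_ball_zero_iff]
    calc ‖c + z • v‖ ≤ ‖c‖ + ‖z‖ * ‖v‖ := by rw [← norm_smul]; exact norm_add_le _ _
      _ < r := by linarith
  have hline : ∀ z : ℂ, HasDerivAt (fun z : ℂ => c + z • v) v z := fun z => by
    simpa using ((hasDerivAt_id z).smul_const v).const_add c
  have hder : ∀ z ∈ Metric.closedBall (0 : ℂ) (r / 2 / ‖v‖),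
      HasDerivAt (fun z : ℂ => f (c + z • v)) (fderiv ℂ f (c + z • v) v) z := fun z hz =>
    (hf _ (hmem z hz)).differentiableAt.hasFDerivAt.comp_hasDerivAt z (hline z)
  have hR : 0 < r / 2 / ‖v‖ := by positivity
  have hcl : DiffContOnCl ℂ (fun z : ℂ => f (c + z • v)) (Metric.ball 0 (r / 2 / ‖v‖)) := by
    refine DifferentiableOn.diffContOnCl fun z hz => ?_
    exact (hder z (Metric.closure_ball_subset_closedBall hz)).differentiableAt.differentiableWithinAt
  have key := Complex.norm_deriv_le_of_forall_mem_sphere_norm_le hR hcl (C := θ * r) fun z hz =>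
    (mem_ball_zero_iff.1 (hmaps (hmem z (Metric.sphere_subset_closedBall hz)))).le
  have h0 := (hder 0 (Metric.mem_closedBall_self hR.le)).deriv
  rw [h0] at key
  simp only [zero_smul, add_zero] at key
  refine key.trans_eq ?_
  field_simp


/-- Angenent's lemma: if `f` is holomorphic on the ball `B_r` of a complex Banach space
and maps `B_r` into `B_{θr}` with `θ < 1/2`, then `f` maps `B_{θr}` into itself, is a
contraction there, and has a unique fixed point in `B_{θr}`. -/
theorem holomorphic_contraction_fixed_point
    (E : Type*) [NormedAddCommGroup E] [NormedSpace ℂ E] [CompleteSpace E]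
    (r θ : ℝ) (hr : 0 < r) (hθ₀ : 0 < θ) (hθ : θ < 1/2)
    (f : E → E) (hf : AnalyticOnNhd ℂ f (Metric.ball 0 r))
    (hmaps : Set.MapsTo f (Metric.ball 0 r) (Metric.ball 0 (θ * r))) :
    Set.MapsTo f (Metric.ball 0 (θ * r)) (Metric.ball 0 (θ * r)) ∧
    (∃ L : NNReal, L < 1 ∧ LipschitzOnWith L f (Metric.ball 0 (θ * r))) ∧
    (∃! x : E, x ∈ Metric.ball 0 (θ * r) ∧ f x = x) := by

  have hθr : θ * r < r := by nlinarith
  have hsub : Metric.closedBall (0 : E) (θ * r) ⊆ Metric.ball 0 r :=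
    Metric.closedBall_subset_ball hθr
  obtain ⟨L, hL⟩ : ∃ L : NNReal, (L : ℝ) = 2 * θ := ⟨⟨2 * θ, by positivity⟩, rfl⟩
  have hL1 : L < 1 := by
    rw [← NNReal.coe_lt_coe, hL, NNReal.coe_one]; linarith
  have hlip : LipschitzOnWith L f (Metric.closedBall (0 : E) (θ * r)) := by
    refine (convex_closedBall (0 : E) (θ * r)).lipschitzOnWith_of_nnnorm_fderiv_le (𝕜 := ℂ)
      (fun x hx => (hf x (hsub hx)).differentiableAt) fun x hx => ?_
    rw [← NNReal.coe_le_coe, coe_nnnorm, hL]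
    exact norm_fderiv_le_two_mul hr hθ₀ hθ hf hmaps (mem_closedBall_zero_iff.1 hx)
  have hself : Set.MapsTo f (Metric.closedBall (0 : E) (θ * r)) (Metric.closedBall 0 (θ * r)) :=
    fun x hx => Metric.ball_subset_closedBall (hmaps (hsub hx))
  refine ⟨fun x hx => hmaps (hsub (Metric.ball_subset_closedBall hx)),
    ⟨_, hL1, hlip.mono Metric.ball_subset_closedBall⟩, ?_⟩
  obtain ⟨x, hx, hfx, -, -⟩ := ContractingWith.exists_fixedPoint'
    Metric.isClosed_closedBall.isComplete hself ⟨hL1, hlip.mapsToRestrict hself⟩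
    (Metric.mem_closedBall_self (by positivity)) (edist_ne_top (0 : E) (f 0))
  refine ⟨x, ⟨by simpa only [hfx.eq] using hmaps (hsub hx), hfx⟩, ?_⟩
  rintro y ⟨hy, hfy⟩
  have h := hlip.dist_le_mul y (Metric.ball_subset_closedBall hy) x hx
  rw [hfy, hfx.eq, hL] at h
  refine dist_le_zero.1 ?_
  nlinarith [dist_nonneg (x := y) (y := x)]
end

section
/- Let ν > 1 and κ > 0. There exist constants K > 0 and δ₀ > 0 such that for every δ ∈ (0, δ₀) and every real t with |t| ≤ π/2 − κδ log(1/δ), one has |∫₀ᵗ (cos τ)^{−ν} dτ| ≤ K · δ^{1−ν} · (log(1/δ))^{1−ν}. -/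
/-!
By Jordan's inequality (concavity of the cosine on `[0, π/2]`), `cos τ ≥ (2/π)(π/2 - τ)`.
So for `0 ≤ t ≤ π/2 - s` the integral is at most
`(2/π)^(-ν) ∫₀ᵗ (π/2 - τ)^(-ν) dτ ≤ (2/π)^(-ν) s^(1-ν) / (ν-1)`. Negative `t` follow since the
cosine is even, and `s = κ δ log(1/δ)` gives the claim with `δ₀ = 1`.
-/

open scoped Real

lemma integral_cos_rpow_le {ν s t : ℝ} (hν : 1 < ν) (hs : 0 < s) (ht : 0 ≤ t)
    (hts : t ≤ π / 2 - s) :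
    |∫ τ in (0:ℝ)..t, (Real.cos τ) ^ (-ν)| ≤ (2 / π) ^ (-ν) * (s ^ (1 - ν) / (ν - 1)) := by
  have hpi := Real.pi_pos
  have hcos : ∀ τ ∈ Set.Icc 0 t, 0 < Real.cos τ := fun τ hτ =>
    Real.cos_pos_of_mem_Ioo ⟨by linarith [hτ.1], by linarith [hτ.2]⟩
  have hf : IntervalIntegrable (fun τ => (Real.cos τ) ^ (-ν)) MeasureTheory.volume 0 t := by
    apply ContinuousOn.intervalIntegrable
    rw [Set.uIcc_of_le ht]
    exact Real.continuous_cos.continuousOn.rpow_const fun τ hτ => Or.inl (hcos τ hτ).ne'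
  have hg : IntervalIntegrable (fun τ => (2 / π) ^ (-ν) * (π / 2 - τ) ^ (-ν))
      MeasureTheory.volume 0 t := by
    apply ContinuousOn.intervalIntegrable
    rw [Set.uIcc_of_le ht]
    refine continuousOn_const.mul (ContinuousOn.rpow_const (by fun_prop) fun τ hτ => Or.inl ?_)
    have := hτ.2
    linarith
  rw [abs_of_nonneg (intervalIntegral.integral_nonneg ht
    fun τ hτ => Real.rpow_nonneg (hcos τ hτ).le _)]
  calc ∫ τ in (0:ℝ)..t, (Real.cos τ) ^ (-ν)
      ≤ ∫ τ in (0:ℝ)..t, (2 / π) ^ (-ν) * (π / 2 - τ) ^ (-ν) := by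
        refine intervalIntegral.integral_mono_on ht hf hg fun τ hτ => ?_
        have h1 : 0 < π / 2 - τ := by linarith [hτ.2]
        rw [← Real.mul_rpow (by positivity) h1.le]
        refine Real.rpow_le_rpow_of_nonpos (by positivity) ?_ (by linarith)
        have h2 := Real.one_sub_mul_le_cos hτ.1 (by linarith)
        have h3 : 2 / π * (π / 2 - τ) = 1 - 2 / π * τ := by field_simp
        linarith
    _ = (2 / π) ^ (-ν) * (((π / 2 - t) ^ (1 - ν) - (π / 2) ^ (1 - ν)) / (ν - 1)) := by
        rw [intervalIntegral.integral_const_mul,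
          intervalIntegral.integral_comp_sub_left (fun x => x ^ (-ν)), integral_rpow]
        · have h1 : -ν + 1 = 1 - ν := by ring
          rw [h1, sub_zero, ← neg_div_neg_eq (_ - _) (1 - ν), neg_sub, neg_sub]
        · refine Or.inr ⟨by linarith, ?_⟩
          rw [Set.uIcc_of_le (by linarith)]
          intro h
          linarith [h.1]
    _ ≤ _ := by
        have h1 : (π / 2 - t) ^ (1 - ν) ≤ s ^ (1 - ν) :=
          Real.rpow_le_rpow_of_nonpos hs (by linarith) (by linarith)
        have h2 : 0 ≤ (π / 2) ^ (1 - ν) := by positivity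
        have h3 : 0 < ν - 1 := by linarith
        gcongr
        linarith

/-- Technical integral estimate: for `ν > 1`, `|∫₀ᵗ (cos τ)^{−ν} dτ| ≤ K δ^{1−ν} log(1/δ)^{1−ν}`
for `|t| ≤ π/2 − κδ log(1/δ)`. -/
theorem integral_cos_rpow_bound (ν κ : ℝ) (hν : 1 < ν) (hκ : 0 < κ) :
    ∃ K δ₀ : ℝ, 0 < K ∧ 0 < δ₀ ∧
      ∀ δ : ℝ, δ ∈ Set.Ioo 0 δ₀ → ∀ t : ℝ, |t| ≤ π/2 - κ * δ * Real.log (1/δ) →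
        |∫ τ in (0:ℝ)..t, (Real.cos τ) ^ (-ν)| ≤
          K * δ ^ (1 - ν) * (Real.log (1/δ)) ^ (1 - ν) := by
  have hν' : 0 < ν - 1 := by linarith
  refine ⟨(2 / π) ^ (-ν) * (κ ^ (1 - ν) / (ν - 1)), 1, by positivity, one_pos, ?_⟩
  rintro δ ⟨hδ, hδ1⟩ t ht
  have hL : 0 < Real.log (1 / δ) := Real.log_pos (by rw [lt_div_iff₀ hδ]; linarith)
  have key := integral_cos_rpow_le hν (by positivity) (abs_nonneg t) ht
  have habs : |∫ τ in (0:ℝ)..t, (Real.cos τ) ^ (-ν)|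
      = |∫ τ in (0:ℝ)..|t|, (Real.cos τ) ^ (-ν)| := by
    rcases abs_choice t with h | h
    · rw [h]
    · have h1 := intervalIntegral.integral_comp_neg (a := 0) (b := t)
        (fun τ => (Real.cos τ) ^ (-ν))
      simp only [Real.cos_neg, neg_zero] at h1
      rw [h, h1, intervalIntegral.integral_symm, abs_neg]
  rw [habs]
  refine key.trans (le_of_eq ?_)
  rw [Real.mul_rpow (by positivity) hL.le, Real.mul_rpow hκ.le hδ.le]
  ring
end
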